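/- arXiv:1805.08901 — 2 statements merged into one kernel-verified Lean document; each statement's English description precedes it below -/
import Mathlib

section
/- Fix reals a > b > 0, set T = log(a/b), and fix β with 0 < β < T·(a−b)/2; set γ = √(β² + a·b·T²) and η(a,b,β) = a + b + β − 2γ/T + (β/T)·log((γ+β)/(γ−β)). For each integer n ≥ 3, let Z₁, …, Z_{⌈n/2⌉} be i.i.d. Bernoulli with success probability min(1, b·log n/n) and W₁, …, W_{⌈n/2⌉} be i.i.d. Bernoulli with success probability min(1, a·log n/n), all mutually independent. Then for every ε > 0 there exists N such that for all n ≥ N, P( Σ_{k=1}^{⌈n/2⌉} (Z_k − W_k) ≥ (β/T)·log n + 1 + log n / log log n ) ≥ n^{−η(a,b,β)/2 − ε}. -/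
open MeasureTheory ProbabilityTheory Filter

/-- `⌈n/2⌉`. -/
noncomputable def half (n : ℕ) : ℕ := ⌈(n : ℝ) / 2⌉₊

lemma log_fact (i : ℕ) (hi : 1 ≤ i) :
    Real.log (i.factorial) ≤ i * Real.log i - i + 1 + Real.log i := by
  induction i, hi using Nat.le_induction with
  | base => simp
  | succ k hk ih =>
    have hk0 : (0:ℝ) < k := by exact_mod_cast hk
    rw [Nat.factorial_succ, Nat.cast_mul, Real.log_mul (by positivity) (by positivity)]
    have h := Real.one_sub_inv_le_log_of_pos (x := ((k:ℝ)+1)/k) (by positivity)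
    rw [Real.log_div (by positivity) (by positivity)] at h
    have h2 : 1 - (((k:ℝ)+1)/k)⁻¹ = 1 / (k+1) := by field_simp; ring
    rw [h2, div_le_iff₀ (by positivity)] at h
    push_cast
    linarith

lemma binom_lower (m i : ℕ) (p : ℝ) (hi : 1 ≤ i) (him : i < m) (hp : 0 < p) (hp1 : p < 1) :
    Real.exp (i * Real.log (((m:ℝ) - i) * p / i) + i - 1 - Real.log i - m * (p / (1 - p)))
      ≤ m.choose i * p ^ i * (1 - p) ^ (m - i) := by
  have hi0 : (0:ℝ) < i := by exact_mod_cast hi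
  have hmi : (0:ℝ) < (m:ℝ) - i := by
    have : (i:ℝ) < m := by exact_mod_cast him
    linarith
  have h1 : ((m:ℝ) - i) ^ i / i.factorial ≤ m.choose i := by
    rw [div_le_iff₀ (by positivity)]
    have h := Nat.pow_sub_le_descFactorial m i
    rw [Nat.descFactorial_eq_factorial_mul_choose] at h
    have h' : (((m + 1 - i : ℕ) : ℝ)) ^ i ≤ i.factorial * m.choose i := by exact_mod_cast h
    have h3 : ((m:ℝ) - i) ≤ ((m + 1 - i : ℕ) : ℝ) := by
      rw [Nat.cast_sub (by omega)]; push_cast; linarith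
    calc ((m:ℝ) - i) ^ i ≤ ((m + 1 - i : ℕ) : ℝ) ^ i := by gcongr
      _ ≤ _ := h'
      _ = _ := by ring
  have h2 : Real.exp (-(m * (p / (1 - p)))) ≤ (1 - p) ^ (m - i) := by
    have hq : 0 < 1 - p := by linarith
    have h := Real.one_sub_inv_le_log_of_pos hq
    have h3 : 1 - (1 - p)⁻¹ = - (p / (1 - p)) := by field_simp; ring
    rw [h3] at h
    calc Real.exp (-(m * (p / (1 - p)))) ≤ Real.exp (m * Real.log (1 - p)) := by
          apply Real.exp_le_exp.2
          have := mul_le_mul_of_nonneg_left h (Nat.cast_nonneg (α := ℝ) m)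
          linarith
      _ = (1 - p) ^ m := by rw [Real.exp_nat_mul, Real.exp_log hq]
      _ ≤ (1 - p) ^ (m - i) := pow_le_pow_of_le_one hq.le (by linarith) (by omega)
  have h4 : Real.exp (i * Real.log (((m:ℝ) - i) * p / i) + i - 1 - Real.log i)
      ≤ ((m:ℝ) - i) ^ i / i.factorial * p ^ i := by
    have hl := log_fact i hi
    have : 0 < ((m:ℝ) - i) ^ i / i.factorial * p ^ i := by positivity
    rw [← Real.le_log_iff_exp_le this]
    rw [Real.log_mul (by positivity) (by positivity), Real.log_div (by positivity) (by positivity),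
      Real.log_div (by positivity) (by positivity), Real.log_mul (by positivity) (by positivity),
      Real.log_pow, Real.log_pow]
    linarith
  rw [sub_eq_add_neg _ ((m:ℝ) * _), Real.exp_add]
  calc _ ≤ (((m:ℝ) - i) ^ i / i.factorial * p ^ i) * (1 - p) ^ (m - i) := by gcongr
    _ ≤ _ := by
      have : 0 ≤ 1 - p := by linarith
      gcongr

lemma prob_lower {Ω : Type*} [MeasurableSpace Ω] (μ : Measure Ω) [IsProbabilityMeasure μ] (m i j : ℕ)
    (Z W : Fin m → Ω → ℝ) (hmZ : ∀ k, Measurable (Z k)) (hmW : ∀ k, Measurable (W k))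
    (hind : iIndepFun (Sum.elim Z W) μ) (p q t : ℝ) (hp : 0 ≤ p) (hp1 : p ≤ 1)
    (hq : 0 ≤ q) (hq1 : q ≤ 1)
    (hZ : ∀ k, μ {ω | Z k ω = 1} = ENNReal.ofReal p ∧ μ {ω | Z k ω = 0} = 1 - ENNReal.ofReal p)
    (hW : ∀ k, μ {ω | W k ω = 1} = ENNReal.ofReal q ∧ μ {ω | W k ω = 0} = 1 - ENNReal.ofReal q)
    (ht : t ≤ (i:ℝ) - j) :
    (m.choose i * p ^ i * (1 - p) ^ (m - i)) * (m.choose j * q ^ j * (1 - q) ^ (m - j))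
      ≤ (μ {ω | t ≤ ∑ k, (Z k ω - W k ω)}).toReal := by
  classical
  let F : Finset (Fin m) × Finset (Fin m) → Fin m ⊕ Fin m → ℝ := fun x =>
    Sum.elim (fun k => if k ∈ x.1 then 1 else 0) (fun k => if k ∈ x.2 then 1 else 0)
  let E : Finset (Fin m) × Finset (Fin m) → Set Ω := fun x =>
    ⋂ s ∈ (Finset.univ : Finset (Fin m ⊕ Fin m)), (Sum.elim Z W s) ⁻¹' {F x s}
  let I := (Finset.powersetCard i (Finset.univ : Finset (Fin m))) ×ˢ
    (Finset.powersetCard j (Finset.univ : Finset (Fin m)))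
  have hmS : ∀ s, Measurable (Sum.elim Z W s) := by
    rintro (k | k)
    · exact hmZ k
    · exact hmW k
  have hE : ∀ x ω, ω ∈ E x ↔ (∀ k, Z k ω = if k ∈ x.1 then 1 else 0) ∧
      (∀ k, W k ω = if k ∈ x.2 then 1 else 0) := by
    intro x ω
    simp [E, F, Sum.forall]
  have hEm : ∀ x, MeasurableSet (E x) := fun x =>
    Finset.measurableSet_biInter _ fun s _ => hmS s (measurableSet_singleton _)
  have hdisj : Set.PairwiseDisjoint (I : Set (Finset (Fin m) × Finset (Fin m))) E := by
    intro x _ y _ hxy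
    refine Set.disjoint_left.2 fun ω hx hy => hxy ?_
    rw [hE] at hx hy
    have key : ∀ (A B : Finset (Fin m)) (V : Fin m → ℝ), (∀ k, V k = if k ∈ A then 1 else 0) →
        (∀ k, V k = if k ∈ B then 1 else 0) → A = B := by
      intro A B V hA hB
      ext k
      have h1 := hA k
      have h2 := hB k
      rw [h1] at h2
      by_cases h : k ∈ A <;> by_cases h' : k ∈ B <;> simp_all
    exact Prod.ext (key _ _ _ hx.1 hy.1) (key _ _ _ hx.2 hy.2)
  have hsub : (⋃ x ∈ I, E x) ⊆ {ω | t ≤ ∑ k, (Z k ω - W k ω)} := by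
    intro ω hω
    simp only [Set.mem_iUnion] at hω
    obtain ⟨x, hx, hω⟩ := hω
    rw [hE] at hω
    simp only [I, Finset.mem_product, Finset.mem_powersetCard] at hx
    simp only [Set.mem_ofPred_eq, hω.1, hω.2, Finset.sum_sub_distrib]
    simpa [hx.1.2, hx.2.2] using ht
  have cnt : ∀ (A : Finset (Fin m)) (c d : ENNReal) ,
      ∏ k, (if k ∈ A then c else d) = c ^ A.card * d ^ (m - A.card) := by
    intro A c d
    rw [Finset.prod_ite]
    simp only [Finset.prod_const]
    congr 2
    · simp
    · rw [Finset.filter_not, Finset.card_sdiff_of_subset (by simp)]; simp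
  have hmeas : ∀ x ∈ I, μ (E x) = ENNReal.ofReal ((p ^ i * (1 - p) ^ (m - i)) * (q ^ j * (1 - q) ^ (m - j))) := by
    intro x hx
    simp only [I, Finset.mem_product, Finset.mem_powersetCard] at hx
    have h := hind.measure_inter_preimage_eq_mul (S := Finset.univ) (sets := fun s => {F x s})
      (fun s _ => measurableSet_singleton _)
    have hz : ∀ k, μ (Z k ⁻¹' {if k ∈ x.1 then (1:ℝ) else 0}) =
        if k ∈ x.1 then ENNReal.ofReal p else ENNReal.ofReal (1 - p) := by
      intro k
      split_ifs
      · exact (hZ k).1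
      · rw [ENNReal.ofReal_sub _ hp, ENNReal.ofReal_one]; exact (hZ k).2
    have hw : ∀ k, μ (W k ⁻¹' {if k ∈ x.2 then (1:ℝ) else 0}) =
        if k ∈ x.2 then ENNReal.ofReal q else ENNReal.ofReal (1 - q) := by
      intro k
      split_ifs
      · exact (hW k).1
      · rw [ENNReal.ofReal_sub _ hq, ENNReal.ofReal_one]; exact (hW k).2
    have hp2 : 0 ≤ 1 - p := by linarith
    have hq2 : 0 ≤ 1 - q := by linarith
    refine h.trans ?_
    rw [Fintype.prod_sum_type]
    simp only [F, Sum.elim_inl, Sum.elim_inr, hz, hw, cnt, hx.1.2, hx.2.2]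
    rw [ENNReal.ofReal_mul (by positivity), ENNReal.ofReal_mul (by positivity),
      ENNReal.ofReal_mul (by positivity), ENNReal.ofReal_pow hp, ENNReal.ofReal_pow hp2,
      ENNReal.ofReal_pow hq, ENNReal.ofReal_pow hq2]
  have hp2 : 0 ≤ 1 - p := by linarith
  have hq2 : 0 ≤ 1 - q := by linarith
  have hU : μ (⋃ x ∈ I, E x) = (m.choose i * m.choose j : ℕ) *
      ENNReal.ofReal ((p ^ i * (1 - p) ^ (m - i)) * (q ^ j * (1 - q) ^ (m - j))) := by
    rw [measure_biUnion_finset hdisj (fun x _ => hEm x), Finset.sum_congr rfl hmeas]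
    simp [I]
  calc _ = (μ (⋃ x ∈ I, E x)).toReal := by
        rw [hU, ENNReal.toReal_mul, ENNReal.toReal_ofReal (by positivity)]
        simp; ring
    _ ≤ _ := ENNReal.toReal_mono (measure_ne_top _ _) (measure_mono hsub)

lemma tendsto_logn : Tendsto (fun n : ℕ => Real.log n) atTop atTop :=
  Real.tendsto_log_atTop.comp tendsto_natCast_atTop_atTop

lemma tendsto_log_div_id : Tendsto (fun x : ℝ => Real.log x / x) atTop (nhds 0) := by
  simpa using Real.isLittleO_log_id_atTop.tendsto_div_nhds_zero

lemma tendsto_logn_div : Tendsto (fun n : ℕ => Real.log n / n) atTop (nhds 0) :=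
  tendsto_log_div_id.comp tendsto_natCast_atTop_atTop

lemma tendsto_half : Tendsto (fun n : ℕ => (half n : ℝ) / n) atTop (nhds (1/2)) := by
  have h := (tendsto_nat_ceil_mul_div_atTop (R := ℝ) (a := 1/2) (by norm_num)).comp
    tendsto_natCast_atTop_atTop
  refine h.congr fun n => ?_
  simp [half, div_eq_inv_mul]

lemma asymp (lam α r : ℝ) (hl : 0 < lam) (hα : 0 < α) (i : ℕ → ℕ)
    (hi : Tendsto (fun n => (i n : ℝ) / Real.log n) atTop (nhds α))
    (hr : r < α * Real.log (lam / (2 * α)) + α - lam / 2) :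
    ∀ᶠ n : ℕ in atTop, Real.exp (r * Real.log n) ≤
      (half n).choose (i n) * (min 1 (lam * Real.log n / n)) ^ (i n) *
        (1 - min 1 (lam * Real.log n / n)) ^ (half n - i n) := by
  have hL := tendsto_logn
  have hLinv : Tendsto (fun n : ℕ => 1 / Real.log n) atTop (nhds 0) := by
    simp only [one_div]; exact hL.inv_tendsto_atTop
  have hp : Tendsto (fun n : ℕ => lam * Real.log n / n) atTop (nhds 0) := by
    have := tendsto_logn_div.const_mul lam
    simpa [mul_div_assoc] using this
  have hin : Tendsto (fun n : ℕ => (i n : ℝ) / n) atTop (nhds 0) := by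
    have h := hi.mul tendsto_logn_div
    rw [mul_zero] at h
    refine h.congr' ?_
    filter_upwards [hL.eventually_gt_atTop 0] with n hn
    field_simp
  have hmi : Tendsto (fun n : ℕ => (half n : ℝ) / n - (i n : ℝ) / n) atTop (nhds (1/2)) := by
    simpa using tendsto_half.sub hin
  have hlog : Tendsto (fun n : ℕ => Real.log
      (((half n : ℝ) / n - (i n : ℝ) / n) * lam / ((i n : ℝ) / Real.log n))) atTop
      (nhds (Real.log (lam / (2 * α)))) := by
    have h := (hmi.mul_const lam).div hi hα.ne'
    have e : 1 / 2 * lam / α = lam / (2 * α) := by field_simp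
    rw [e] at h
    exact h.log (by positivity)
  have hlogi : Tendsto (fun n : ℕ => Real.log ((i n : ℝ) / Real.log n) * (1 / Real.log n)
      + Real.log (Real.log n) / Real.log n) atTop (nhds 0) := by
    have h := ((hi.log hα.ne').mul hLinv).add (tendsto_log_div_id.comp hL)
    simpa using h
  have hlast : Tendsto (fun n : ℕ => (half n : ℝ) / n * (lam / (1 - lam * Real.log n / n))) atTop
      (nhds (lam / 2)) := by
    have h := tendsto_half.mul ((tendsto_const_nhds (x := lam)).div
      ((tendsto_const_nhds (x := (1:ℝ))).sub hp) (by norm_num))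
    have e : 1 / 2 * (lam / (1 - 0)) = lam / 2 := by ring
    rw [e] at h
    exact h
  have hG := ((((hi.mul hlog).add hi).sub hLinv).sub hlogi).sub hlast
  simp only [sub_zero] at hG
  filter_upwards [hG.eventually_const_lt hr, hL.eventually_gt_atTop 0,
    hp.eventually_lt_const (show (0:ℝ) < 1 by norm_num), hi.eventually_const_lt hα,
    hmi.eventually_const_lt (show (0:ℝ) < 1/2 by norm_num), eventually_gt_atTop 0]
    with n hg hLn hpn hin0 hmin hn
  have hn0 : (0:ℝ) < n := by exact_mod_cast hn
  have hip : (0:ℝ) < i n := by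
    rcases (Nat.cast_nonneg (α := ℝ) (i n)).lt_or_eq with h | h
    · exact h
    · rw [← h] at hin0; simp at hin0
  have him : i n < half n := by
    rw [← sub_div, lt_div_iff₀ hn0, zero_mul, sub_pos] at hmin
    exact_mod_cast hmin
  rw [min_eq_right hpn.le]
  refine le_trans ?_ (binom_lower (half n) (i n) _ (by exact_mod_cast hip) him (by positivity) hpn)
  apply Real.exp_le_exp.2
  have hg' := mul_le_mul_of_nonneg_right hg.le hLn.le
  refine hg'.trans (le_of_eq ?_)
  have e1 : ((half n : ℝ) / n - (i n : ℝ) / n) * lam / ((i n : ℝ) / Real.log n) =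
      ((half n : ℝ) - i n) * (lam * Real.log n / n) / i n := by field_simp
  rw [e1, Real.log_div hip.ne' hLn.ne']
  have h1 : (0:ℝ) < 1 - lam * Real.log n / n := by linarith
  have e2 : (half n : ℝ) / n * (lam / (1 - lam * Real.log n / n)) * Real.log n =
      half n * (lam * Real.log n / n / (1 - lam * Real.log n / n)) := by
    ring
  rw [sub_mul, e2]
  congr 1
  field_simp
  ring

lemma rate_eq (a b β : ℝ) (hb : 0 < b) (hab : b < a) (hβ : 0 < β) :
    let T : ℝ := Real.log (a / b)
    let γ : ℝ := Real.sqrt (β ^ 2 + a * b * T ^ 2)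
    let η : ℝ := a + b + β - 2 * γ / T + (β / T) * Real.log ((γ + β) / (γ - β))
    0 < T ∧ ∃ α₁ α₂ : ℝ, 0 < α₁ ∧ 0 < α₂ ∧ α₁ = β / T + α₂ ∧
      (α₁ * Real.log (b / (2 * α₁)) + α₁ - b / 2) + (α₂ * Real.log (a / (2 * α₂)) + α₂ - a / 2)
        = - η / 2 := by
  intro T γ η
  have ha : 0 < a := hb.trans hab
  have hT : 0 < T := Real.log_pos (by rwa [one_lt_div hb])
  have hγ2 : γ ^ 2 = β ^ 2 + a * b * T ^ 2 := Real.sq_sqrt (by positivity)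
  have hγ : β < γ := Real.lt_sqrt_of_sq_lt (by have : 0 < a * b * T ^ 2 := by positivity
                                               linarith)
  have hs : 0 < γ - β := by linarith
  have hg : 0 < γ + β := by linarith
  have hprod : (γ + β) * (γ - β) = a * b * T ^ 2 := by linarith [hγ2, (by ring : (γ + β) * (γ - β) = γ ^ 2 - β ^ 2)]
  refine ⟨hT, (γ + β) / (2 * T), (γ - β) / (2 * T), by positivity, by positivity, ?_, ?_⟩
  · field_simp; ring
  · have l1 : Real.log (b / (2 * ((γ + β) / (2 * T)))) = Real.log b + Real.log T - Real.log (γ + β) := by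
      rw [show b / (2 * ((γ + β) / (2 * T))) = b * T / (γ + β) by field_simp,
        Real.log_div (by positivity) hg.ne', Real.log_mul hb.ne' hT.ne']
    have l2 : Real.log (a / (2 * ((γ - β) / (2 * T)))) = Real.log a + Real.log T - Real.log (γ - β) := by
      rw [show a / (2 * ((γ - β) / (2 * T))) = a * T / (γ - β) by field_simp,
        Real.log_div (by positivity) hs.ne', Real.log_mul ha.ne' hT.ne']
    have l3 : Real.log (γ + β) + Real.log (γ - β) = Real.log a + Real.log b + 2 * Real.log T := by
      rw [← Real.log_mul hg.ne' hs.ne', hprod, Real.log_mul (by positivity) (by positivity),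
        Real.log_mul ha.ne' hb.ne', Real.log_pow]; norm_num
    have l4 : T = Real.log a - Real.log b := Real.log_div ha.ne' hb.ne'
    have l5 : Real.log T = (Real.log (γ + β) + Real.log (γ - β) - Real.log a - Real.log b) / 2 := by
      linarith
    rw [l1, l2]
    simp only [η]
    rw [Real.log_div hg.ne' hs.ne', l5]
    have l6 : Real.log a = T + Real.log b := by linarith
    rw [l6]
    field_simp
    ring

theorem sbm_llr_lower_bound_noisy_side_info
    (a b : ℝ) (hb : 0 < b) (hab : b < a)
    (β : ℝ) (hβ : 0 < β) (hβ2 : β < Real.log (a / b) * (a - b) / 2)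
    (Ω : ℕ → Type*) (mΩ : ∀ n, MeasurableSpace (Ω n))
    (P : ∀ n, Measure (Ω n)) (hP : ∀ n, IsProbabilityMeasure (P n))
    (Z W : ∀ n, Fin (half n) → Ω n → ℝ)
    (hmZ : ∀ n k, Measurable (Z n k)) (hmW : ∀ n k, Measurable (W n k))
    (hindep : ∀ n, 3 ≤ n →
      iIndepFun (Sum.elim (Z n) (W n)) (P n))
    (hZ : ∀ n, 3 ≤ n → ∀ k,
      P n {ω | Z n k ω = 1} = ENNReal.ofReal (min 1 (b * Real.log n / n)) ∧
      P n {ω | Z n k ω = 0} = 1 - ENNReal.ofReal (min 1 (b * Real.log n / n)))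
    (hW : ∀ n, 3 ≤ n → ∀ k,
      P n {ω | W n k ω = 1} = ENNReal.ofReal (min 1 (a * Real.log n / n)) ∧
      P n {ω | W n k ω = 0} = 1 - ENNReal.ofReal (min 1 (a * Real.log n / n))) :
    let T : ℝ := Real.log (a / b)
    let γ : ℝ := Real.sqrt (β ^ 2 + a * b * T ^ 2)
    let η : ℝ := a + b + β - 2 * γ / T + (β / T) * Real.log ((γ + β) / (γ - β))
    ∀ ε > (0 : ℝ), ∃ N : ℕ, ∀ n ≥ N,
      (n : ℝ) ^ (-η / 2 - ε)
        ≤ (P n {ω | (β / T) * Real.log n + 1 + Real.log n / Real.log (Real.log n)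
            ≤ ∑ k, (Z n k ω - W n k ω)}).toReal := by
  intro T γ η ε hε
  obtain ⟨hT, α₁, α₂, h1, h2, h12, hrate⟩ := rate_eq a b β hb hab hβ
  change 0 < T at hT
  change α₁ = β / T + α₂ at h12
  change _ = -η / 2 at hrate
  have hL := tendsto_logn
  have hLL : Tendsto (fun n : ℕ => Real.log (Real.log n)) atTop atTop :=
    Real.tendsto_log_atTop.comp hL
  let t : ℕ → ℝ := fun n => (β / T) * Real.log n + 1 + Real.log n / Real.log (Real.log n)
  let j : ℕ → ℕ := fun n => ⌊α₂ * Real.log n⌋₊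
  let i : ℕ → ℕ := fun n => ⌈t n⌉₊ + j n
  have hj : Tendsto (fun n => (j n : ℝ) / Real.log n) atTop (nhds α₂) :=
    (tendsto_nat_floor_mul_div_atTop h2.le).comp hL
  have hLinv : Tendsto (fun n : ℕ => 1 / Real.log n) atTop (nhds 0) := by
    simp only [one_div]; exact hL.inv_tendsto_atTop
  have ht : Tendsto (fun n => t n / Real.log n) atTop (nhds (β / T)) := by
    have h := ((tendsto_const_nhds (x := β / T) (f := atTop)).add hLinv).add hLL.inv_tendsto_atTop
    rw [add_zero, add_zero] at h
    refine h.congr' ?_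
    filter_upwards [hL.eventually_gt_atTop 0, hLL.eventually_gt_atTop 0] with n hn hn2
    simp only [t, Pi.inv_apply]
    field_simp
  have hc : Tendsto (fun n => (⌈t n⌉₊ : ℝ) / Real.log n) atTop (nhds (β / T)) := by
    have h := ht.add hLinv
    rw [add_zero] at h
    refine tendsto_of_tendsto_of_tendsto_of_le_of_le' ht h ?_ ?_
    · filter_upwards [hL.eventually_gt_atTop 0] with n hn
      have := Nat.le_ceil (t n)
      gcongr
    · filter_upwards [hL.eventually_gt_atTop 0, hLL.eventually_gt_atTop 0] with n hn hn2
      have := Nat.ceil_lt_add_one (a := t n) (by simp only [t]; positivity)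
      rw [← add_div]
      gcongr
  have hi : Tendsto (fun n => (i n : ℝ) / Real.log n) atTop (nhds α₁) := by
    have h := hc.add hj
    rw [← h12] at h
    refine h.congr fun n => ?_
    simp only [i]; push_cast; ring
  have A := asymp b α₁ (α₁ * Real.log (b / (2 * α₁)) + α₁ - b / 2 - ε / 2) hb h1 i hi (by linarith)
  have B := asymp a α₂ (α₂ * Real.log (a / (2 * α₂)) + α₂ - a / 2 - ε / 2) (hb.trans hab) h2 j hj
    (by linarith)
  obtain ⟨N, hN⟩ := eventually_atTop.1 (A.and (B.and (eventually_ge_atTop 3)))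
  refine ⟨N, fun n hn => ?_⟩
  obtain ⟨hA, hB, hn3⟩ := hN n hn
  have hn0 : (0:ℝ) < n := by exact_mod_cast (by omega : 0 < n)
  have hlog : 0 ≤ Real.log n := Real.log_natCast_nonneg n
  have ha := hb.trans hab
  have := hP n
  refine le_trans ?_ (prob_lower (P n) (half n) (i n) (j n) (Z n) (W n) (hmZ n) (hmW n)
    (hindep n hn3) _ _ _ (le_min zero_le_one (by positivity)) (min_le_left _ _)
    (le_min zero_le_one (by positivity)) (min_le_left _ _) (hZ n hn3) (hW n hn3) ?_)
  · refine le_trans (le_of_eq ?_) (mul_le_mul hA hB (Real.exp_pos _).le ((Real.exp_pos _).le.trans hA))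
    rw [← Real.exp_add, Real.rpow_def_of_pos hn0, ← hrate]
    congr 1
    ring
  · have := Nat.le_ceil (t n)
    simp only [i]; push_cast
    simpa [t] using this
end

section
/- Fix reals a > b > 0. For each integer n ≥ 3, let Z₁, …, Z_{⌈n/2⌉} be i.i.d. Bernoulli with success probability min(1, b·log n/n) and W₁, …, W_{⌈n/2⌉} be i.i.d. Bernoulli with success probability min(1, a·log n/n), all mutually independent. Then for every ε > 0 there exists N such that for all n ≥ N, P( Σ_{k=1}^{⌈n/2⌉} (Z_k − W_k) ≥ 0 ) ≤ n^{−(√a−√b)²/2 + ε}. -/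
open MeasureTheory ProbabilityTheory Filter

/-- The exponential moment of a Bernoulli variable. -/
theorem bern_mgf {Ω : Type*} [MeasurableSpace Ω] (μ : Measure Ω) [IsProbabilityMeasure μ]
    (X : Ω → ℝ) (hX : Measurable X) (p : ℝ) (hp0 : 0 ≤ p) (hp1 : p ≤ 1)
    (h1 : μ {ω | X ω = 1} = ENNReal.ofReal p)
    (h0 : μ {ω | X ω = 0} = 1 - ENNReal.ofReal p) (t : ℝ) :
    Integrable (fun ω => Real.exp (t * X ω)) μ ∧
      mgf X μ t ≤ Real.exp (p * (Real.exp t - 1)) := by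
  have m1 : MeasurableSet {ω | X ω = 1} := hX (measurableSet_singleton 1)
  have m0 : MeasurableSet {ω | X ω = 0} := hX (measurableSet_singleton 0)
  have hae : ∀ᵐ ω ∂μ, ω ∈ {ω | X ω = 1} ∪ {ω | X ω = 0} := by
    refine (mem_ae_iff_prob_eq_one (m1.union m0)).2 ?_
    rw [measure_union _ m0, h1, h0]
    · exact add_tsub_cancel_of_le (ENNReal.ofReal_le_one.2 hp1)
    · rw [Set.disjoint_left]
      intro ω (h : X ω = 1) (h' : X ω = 0)
      linarith
  have heq : (fun ω => Real.exp (t * X ω)) =ᵐ[μ]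
      fun ω => 1 + Set.indicator {ω | X ω = 1} (fun _ => Real.exp t - 1) ω := by
    filter_upwards [hae] with ω hω
    rcases hω with h | h
    · have h' : X ω = 1 := h
      rw [Set.indicator_of_mem h, h']
      simp
    · have h' : X ω = 0 := h
      have hn : ω ∉ {ω | X ω = 1} := by
        intro (h2 : X ω = 1)
        linarith
      rw [Set.indicator_of_notMem hn, h']
      simp
  have hi : Integrable (Set.indicator {ω | X ω = 1} (fun _ => Real.exp t - 1)) μ :=
    (integrable_const _).indicator m1
  refine ⟨((integrable_const 1).add hi).congr heq.symm, ?_⟩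
  rw [mgf, integral_congr_ae heq, integral_add (integrable_const 1) hi,
    integral_indicator_const _ m1, measureReal_def, h1, ENNReal.toReal_ofReal hp0]
  have := Real.add_one_le_exp (p * (Real.exp t - 1))
  simp
  linarith

/-- Chernoff bound for the difference of two independent binomials. -/
theorem chernoff_diff {Ω : Type*} [MeasurableSpace Ω] (μ : Measure Ω) [IsProbabilityMeasure μ]
    (m : ℕ) (Z W : Fin m → Ω → ℝ) (hmZ : ∀ k, Measurable (Z k)) (hmW : ∀ k, Measurable (W k))
    (hindep : iIndepFun (Sum.elim Z W) μ) (p q : ℝ) (hp0 : 0 ≤ p) (hp1 : p ≤ 1)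
    (hq0 : 0 ≤ q) (hq1 : q ≤ 1)
    (hZ : ∀ k, μ {ω | Z k ω = 1} = ENNReal.ofReal p ∧ μ {ω | Z k ω = 0} = 1 - ENNReal.ofReal p)
    (hW : ∀ k, μ {ω | W k ω = 1} = ENNReal.ofReal q ∧ μ {ω | W k ω = 0} = 1 - ENNReal.ofReal q)
    (t : ℝ) (ht : 0 ≤ t) :
    (μ {ω | (0 : ℝ) ≤ ∑ k, (Z k ω - W k ω)}).toReal ≤
      Real.exp (m * (p * (Real.exp t - 1) + q * (Real.exp (-t) - 1))) := by
  have hY : iIndepFun (Sum.elim Z (fun k => - W k)) μ := by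
    have := hindep.comp (Sum.elim (fun _ x => x) (fun _ x => -x) : Fin m ⊕ Fin m → ℝ → ℝ)
      (by rintro (k | k)
          · exact measurable_id
          · exact measurable_neg)
    convert this using 1
    funext i
    rcases i with k | k <;> rfl
  have hmY : ∀ i, Measurable (Sum.elim Z (fun k => - W k) i) := by
    rintro (k | k)
    · exact hmZ k
    · exact (hmW k).neg
  have bZ := fun k => bern_mgf μ (Z k) (hmZ k) p hp0 hp1 (hZ k).1 (hZ k).2 t
  have bW := fun k => bern_mgf μ (W k) (hmW k) q hq0 hq1 (hW k).1 (hW k).2 (-t)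
  have hint := hY.integrable_exp_mul_sum (t := t) hmY (s := Finset.univ) (by
    rintro (k | k) -
    · exact (bZ k).1
    · simpa using (bW k).1)
  have key := measure_ge_le_exp_mul_mgf 0 ht hint
  rw [hY.mgf_sum hmY, Fintype.prod_sum_type] at key
  have hset : {ω | (0 : ℝ) ≤ ∑ k, (Z k ω - W k ω)} =
      {ω | (0 : ℝ) ≤ (∑ i, Sum.elim Z (fun k => - W k) i) ω} := by
    ext ω
    simp [Finset.sum_apply, Fintype.sum_sum_type, Finset.sum_sub_distrib]
  rw [hset]
  refine key.trans ?_
  simp only [mul_zero, Real.exp_zero, one_mul, Sum.elim_inl, Sum.elim_inr, mgf_neg]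
  rw [mul_add, Real.exp_add]
  have e1 : ∀ (c : ℝ) (f : Fin m → ℝ), (∀ k, 0 ≤ f k) → (∀ k, f k ≤ Real.exp c) →
      ∏ k, f k ≤ Real.exp (m * c) := by
    intro c f h0 h1
    refine (Finset.prod_le_prod (fun k _ => h0 k) (fun k _ => h1 k)).trans ?_
    simp [Real.exp_nat_mul]
  exact mul_le_mul (e1 _ _ (fun k => mgf_nonneg) fun k => (bZ k).2)
    (e1 _ _ (fun k => mgf_nonneg) fun k => (bW k).2)
    (Finset.prod_nonneg fun k _ => mgf_nonneg) (Real.exp_pos _).le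

theorem sbm_llr_upper_bound_no_side_info
    (a b : ℝ) (hb : 0 < b) (hab : b < a)
    (Ω : ℕ → Type*) (mΩ : ∀ n, MeasurableSpace (Ω n))
    (P : ∀ n, Measure (Ω n)) (hP : ∀ n, IsProbabilityMeasure (P n))
    (Z W : ∀ n, Fin (half n) → Ω n → ℝ)
    (hmZ : ∀ n k, Measurable (Z n k)) (hmW : ∀ n k, Measurable (W n k))
    (hindep : ∀ n, 3 ≤ n →
      iIndepFun (Sum.elim (Z n) (W n)) (P n))
    (hZ : ∀ n, 3 ≤ n → ∀ k,
      P n {ω | Z n k ω = 1} = ENNReal.ofReal (min 1 (b * Real.log n / n)) ∧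
      P n {ω | Z n k ω = 0} = 1 - ENNReal.ofReal (min 1 (b * Real.log n / n)))
    (hW : ∀ n, 3 ≤ n → ∀ k,
      P n {ω | W n k ω = 1} = ENNReal.ofReal (min 1 (a * Real.log n / n)) ∧
      P n {ω | W n k ω = 0} = 1 - ENNReal.ofReal (min 1 (a * Real.log n / n))) :
    ∀ ε > (0 : ℝ), ∃ N : ℕ, ∀ n ≥ N,
      (P n {ω | (0 : ℝ) ≤ ∑ k, (Z n k ω - W n k ω)}).toReal
        ≤ (n : ℝ) ^ (-((Real.sqrt a - Real.sqrt b) ^ 2) / 2 + ε) := by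
  intro ε hε
  have hlim : Tendsto (fun n : ℕ => a * Real.log n / n) atTop (nhds 0) := by
    have h := (Real.isLittleO_log_id_atTop.tendsto_div_nhds_zero.comp
      (tendsto_natCast_atTop_atTop (R := ℝ))).const_mul a
    simpa [Function.comp_def, mul_div_assoc] using h
  obtain ⟨N, hN⟩ := eventually_atTop.1 (hlim.eventually_le_const one_pos)
  refine ⟨max N 3, fun n hn => ?_⟩
  have h3 : 3 ≤ n := le_trans (le_max_right _ _) hn
  have hq1 : a * Real.log n / n ≤ 1 := hN n (le_trans (le_max_left _ _) hn)
  have ha : 0 < a := hb.trans hab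
  have hn1 : (1 : ℝ) ≤ n := by exact_mod_cast (by omega : 1 ≤ n)
  have hn0 : (0 : ℝ) < n := by linarith
  have hL : 0 ≤ Real.log n := Real.log_nonneg hn1
  have hp1 : b * Real.log n / n ≤ 1 := le_trans (by gcongr) hq1
  have hp0 : 0 ≤ b * Real.log n / n := by positivity
  have hq0 : 0 ≤ a * Real.log n / n := by positivity
  have := hP n
  have hZ' := hZ n h3
  have hW' := hW n h3
  rw [min_eq_right hp1] at hZ'
  rw [min_eq_right hq1] at hW'
  have hsb : 0 < Real.sqrt b := Real.sqrt_pos.2 hb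
  have hsa : 0 < Real.sqrt a := Real.sqrt_pos.2 ha
  have hsab : Real.sqrt b ≤ Real.sqrt a := Real.sqrt_le_sqrt hab.le
  have hr : 1 ≤ Real.sqrt a / Real.sqrt b := (one_le_div hsb).2 hsab
  have key := chernoff_diff (P n) (half n) (Z n) (W n) (hmZ n) (hmW n) (hindep n h3)
    _ _ hp0 hp1 hq0 hq1 hZ' hW' (Real.log (Real.sqrt a / Real.sqrt b)) (Real.log_nonneg hr)
  refine key.trans ?_
  rw [Real.exp_neg, Real.exp_log (by positivity), Real.rpow_def_of_pos hn0, Real.exp_le_exp]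
  have hid : b * Real.log n / n * (Real.sqrt a / Real.sqrt b - 1) +
      a * Real.log n / n * ((Real.sqrt a / Real.sqrt b)⁻¹ - 1) =
      -((Real.sqrt a - Real.sqrt b) ^ 2 * Real.log n / n) := by
    have ea := Real.sq_sqrt ha.le
    have eb := Real.sq_sqrt hb.le
    generalize Real.sqrt a = x at *
    generalize Real.sqrt b = y at *
    subst ea eb
    field_simp
    ring
  rw [hid]
  have hm : (n : ℝ) / 2 ≤ half n := Nat.le_ceil _
  have hD : 0 ≤ (Real.sqrt a - Real.sqrt b) ^ 2 * Real.log n / n := by positivity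
  have h1 := mul_le_mul_of_nonneg_right hm hD
  have h2 : (n : ℝ) / 2 * ((Real.sqrt a - Real.sqrt b) ^ 2 * Real.log n / n) =
      (Real.sqrt a - Real.sqrt b) ^ 2 * Real.log n / 2 := by
    field_simp
  have h4 : 0 ≤ Real.log n * ε := by positivity
  nlinarith
end
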